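/- Let $F_n$ be the free associative algebra over a field of characteristic zero generated by $x_1,\dots,x_n$ and $\mathfrak{f}_n \subset F_n$ the free Lie algebra on the same generators, so that $F_n = U(\mathfrak{f}_n)$ and the symmetrization $\mathrm{sym} : S(\mathfrak{f}_n) \to F_n$ is a linear isomorphism. Let $p_n : F_n \to \mathfrak{f}_n$ be the composition of $\mathrm{sym}^{-1}$ with the projection of $S(\mathfrak{f}_n) = \oplus_{k \geq 0} S^k(\mathfrak{f}_n)$ onto $S^1(\mathfrak{f}_n) = \mathfrak{f}_n$. Then $p_n = \mathrm{cbh}_n$, i.e., $p_n(1) = 0$ and $p_n(x_{i_1}\cdots x_{i_k}) = \mathrm{CBH}_k(x_{i_1},\dots,x_{i_k})$ for every sequence $(i_1,\dots,i_k)$ of elements of $\{1,\dots,n\}$. -/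

import Mathlib

/-!
Common setup: a concrete model of the degree completion `F̂ₙ` of the free
associative algebra on `n` generators `x₁, …, xₙ` over a field `K` of
characteristic zero, as the space of formal (possibly infinite) `K`-linear
combinations of words in the letters `x₁, …, xₙ`, i.e. functions
`List (Fin n) → K` (the value at a word is its coefficient).  The product is
the (well-defined) convolution/concatenation product.  The free associative
algebra `Fₙ` sits inside as the finitely supported functions; the word `w`
corresponds to `delta w`, and `xᵢ = delta [i]`.
-/

noncomputable section

open Finset

namespace CBHPaper

/-- The degree completion `F̂ₙ` of the free associative algebra on `n`
generators over `K`: formal series of words, i.e. functions assigning to every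
word (a list over `Fin n`) its coefficient.  Addition and scalar
multiplication are pointwise (the `Pi` module structure). -/
abbrev Fhat (K : Type) (n : ℕ) : Type := List (Fin n) → K

variable {K : Type} [Field K] [CharZero K] {n : ℕ}

/-- The unit `1` of `F̂ₙ` (the empty word). -/
def oneF : Fhat K n := fun w => if w = [] then 1 else 0

/-- The word `w₀` (a product of generators), viewed as an element of `F̂ₙ`.
In particular `delta [i]` is the generator `xᵢ`. -/
def delta (w₀ : List (Fin n)) : Fhat K n := fun w => if w = w₀ then 1 else 0

/-- The (concatenation) product of `F̂ₙ`: the coefficient of a word `w` in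
`f * g` is the sum over all ways of splitting `w` as a concatenation `u ++ v`
of `f u * g v`. -/
def mulF (f g : Fhat K n) : Fhat K n :=
  fun w => ∑ i ∈ Finset.range (w.length + 1), f (w.take i) * g (w.drop i)

/-- Powers in `F̂ₙ`. -/
def powF (f : Fhat K n) : ℕ → Fhat K n
  | 0 => oneF
  | k + 1 => mulF f (powF f k)

/-- Ordered product of a finite list of elements of `F̂ₙ`. -/
def prodListF : List (Fhat K n) → Fhat K n
  | [] => oneF
  | f :: l => mulF f (prodListF l)

/-- The exponential series `exp f = ∑ₖ fᵏ/k!`; it is the genuine exponential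
when `f` has vanishing constant term (then the sum defining each coefficient
is finite, as accounted for by the truncation below). -/
def expF (f : Fhat K n) : Fhat K n :=
  fun w => ∑ k ∈ Finset.range (w.length + 1), (Nat.factorial k : K)⁻¹ * powF f k w

/-- The logarithm series `log X = ∑_{k ≥ 1} (-1)^{k+1} (X-1)ᵏ / k`; it is the
genuine logarithm (the inverse of `expF`) when `X` has constant term `1`. -/
def logF (X : Fhat K n) : Fhat K n :=
  fun w => ∑ k ∈ Finset.Icc 1 w.length,
    (-1 : K) ^ (k + 1) * (k : K)⁻¹ * powF (X - oneF) k w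

/-- `shuf w u v` is the number of ways of splitting the word `w` into a
subword equal to `u` and a complementary subword equal to `v`; these are the
structure constants of the coproduct `Δ` of `F̂ₙ` for which the generators are
primitive:  `Δ(w) = ∑_{S ⊆ positions of w} w|_S ⊗ w|_{Sᶜ}`. -/
def shuf : List (Fin n) → List (Fin n) → List (Fin n) → ℕ
  | [], u, v => if u = [] ∧ v = [] then 1 else 0
  | a :: w, u, v =>
      (match u with
        | b :: u' => if b = a then shuf w u' v else 0
        | [] => 0) +
      (match v with
        | b :: v' => if b = a then shuf w u v' else 0
        | [] => 0)

/-- The completed coproduct of `F̂ₙ` (for which the generators `xᵢ` are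
primitive), expressed coefficientwise: `coprodF X u v` is the coefficient of
`u ⊗ v` in `Δ(X)`.  Only words of length `|u| + |v|` contribute. -/
def coprodF (X : Fhat K n) (u v : List (Fin n)) : K :=
  ∑ c : Fin (u.length + v.length) → Fin n,
    (shuf (List.ofFn c) u v : K) * X (List.ofFn c)

/-- `X ∈ F̂ₙ` is group-like if `X = 1 + (higher degree)` and `Δ(X) = X ⊗ X`. -/
def IsGroupLike (X : Fhat K n) : Prop :=
  X [] = 1 ∧ ∀ u v, coprodF X u v = X u * X v

/-- The free Lie algebra `fₙ ⊆ Fₙ ⊆ F̂ₙ`: the smallest subspace containing the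
generators `xᵢ` and closed under the commutator bracket `[f,g] = fg - gf`. -/
inductive IsLieElem : Fhat K n → Prop
  | gen (i : Fin n) : IsLieElem (delta [i])
  | zero : IsLieElem 0
  | add {f g : Fhat K n} : IsLieElem f → IsLieElem g → IsLieElem (f + g)
  | smul (c : K) {f : Fhat K n} : IsLieElem f → IsLieElem (c • f)
  | lieBracket {f g : Fhat K n} : IsLieElem f → IsLieElem g →
      IsLieElem (mulF f g - mulF g f)

/-- The homogeneous component of degree `k` of an element of `F̂ₙ`. -/
def trunc (k : ℕ) (f : Fhat K n) : Fhat K n := fun w => if w.length = k then f w else 0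

/-- The completed free Lie algebra `f̂ₙ ⊆ F̂ₙ` (degree completion of `fₙ`):
every homogeneous component is a Lie element. -/
def IsLieElemHat (f : Fhat K n) : Prop := ∀ k, IsLieElem (trunc k f)

/-- `CBHₖ(x₁, …, xₖ)`: the multilinear part (the component of multidegree
`(1,…,1)`, i.e. the part supported on words of length `k` with pairwise
distinct letters) of `log (e^{x₁} ⋯ e^{xₖ})`, an element of `fₖ ⊆ F̂ₖ`. -/
def CBHuniv (K : Type) [Field K] [CharZero K] (k : ℕ) : Fhat K k :=
  fun w =>
    if w.length = k ∧ w.Nodup then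
      logF (prodListF (List.ofFn fun i : Fin k => expF (delta [i]))) w
    else 0

/-- The pushforward (substitution `yⱼ ↦ x_{φ(j)}`) along a map of generators
`φ : Fin k → Fin n`; it is the continuous algebra morphism `F̂ₖ → F̂ₙ` induced
by `φ`. -/
def pushF {k : ℕ} (φ : Fin k → Fin n) (f : Fhat K k) : Fhat K n :=
  fun v => ∑ u : Fin v.length → Fin k,
    if (List.ofFn u).map φ = v then f (List.ofFn u) else 0

/-- `CBH_k(x_{i₁}, …, x_{i_k})` for a word `w = (i₁, …, i_k)` over `Fin n`:
the image of the universal `CBHuniv k` under the substitution `yⱼ ↦ x_{iⱼ}`.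
This is `cbhₙ(x_{i₁} ⋯ x_{i_k})`. -/
def CBHword (w : List (Fin n)) : Fhat K n :=
  pushF w.get (CBHuniv K w.length)

/-- The completion `ĉbhₙ : F̂ₙ → f̂ₙ ⊆ F̂ₙ` of the linear map `cbhₙ` sending
the word `x_{i₁} ⋯ x_{i_k}` to `CBHₖ(x_{i₁}, …, x_{i_k})`:  writing
`X = ∑_w X(w)·w`, `ĉbhₙ(X) = ∑_w X(w)·CBHword w` (for each coefficient this
is a finite sum, since `CBHword w` is homogeneous of degree `|w|`). -/
def cbhHat (X : Fhat K n) : Fhat K n :=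
  fun v => ∑ c : Fin v.length → Fin n, X (List.ofFn c) * CBHword (List.ofFn c) v

/-- The symmetrized product `sym(z₁ ⊙ ⋯ ⊙ z_k) = (1/k!) ∑_σ z_{σ(1)} ⋯ z_{σ(k)}`.
As the `zᵢ` range over (completed) Lie elements, these elements span the image
of `Sᵏ` under the symmetrization map. -/
def symProd {k : ℕ} (z : Fin k → Fhat K n) : Fhat K n :=
  (Nat.factorial k : K)⁻¹ • ∑ σ : Equiv.Perm (Fin k), prodListF (List.ofFn (z ∘ σ))

end CBHPaper

namespace CBHPaper

/-!
Along the powers of a primitive element `z` the identity of `Fₙ` is an exponential series, so its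
logarithm for the convolution product sends `z ^ k` to `z` if `k = 1` and to `0` otherwise. So
does `pₙ` if `z ∈ fₙ`, because `z ^ k` is the symmetrization of `z ⋯ z`, and the powers of Lie
elements span `Fₙ` by polarization. Hence `pₙ` is the convolution logarithm of the identity.

By naturality it remains to evaluate this logarithm on a word `x₁ ⋯ x_k` in distinct letters. The
coproduct of a word is the sum over its splittings into two complementary subwords, and in
distinct letters these are also the ways to distribute the multidegree of a product over its two
factors. For `X = e^{x₁} ⋯ e^{x_k}` the component belonging to a set of letters is their
increasing product, as it is for the identity evaluated at that word; so the convolution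
logarithm of the identity at `x₁ ⋯ x_k` is the multilinear part of `log X`.
-/

section TruncatedLogarithm

variable (K : Type*) {A B : Type*} [Field K] [Ring A] [Algebra K A] [Ring B] [Algebra K B]

/-- The logarithm series of `x`, truncated after the term `(x - 1) ^ N`. -/
def truncLog (N : ℕ) (x : A) : A :=
  ∑ m ∈ Icc 1 N, ((-1 : K) ^ (m + 1) * (m : K)⁻¹) • (x - 1) ^ m

variable {K}

theorem map_truncLog (φ : A →ₐ[K] B) (N : ℕ) (x : A) :
    φ (truncLog K N x) = truncLog K N (φ x) := by
  simp [truncLog]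

open PowerSeries

variable [CharZero K]

theorem derivative_truncLog_exp (N : ℕ) :
    derivative K (truncLog K N (exp K)) = 1 - (1 - exp K) ^ N := by
  induction N with
  | zero => simp [truncLog]
  | succ N ih =>
    have term : derivative K (((-1 : K) ^ (N + 1 + 1) * ((N + 1 : ℕ) : K)⁻¹) •
        (exp K - 1) ^ (N + 1)) = (1 - exp K) ^ N * exp K := by
      have hN : ((N + 1 : ℕ) : K) ≠ 0 := Nat.cast_ne_zero.2 N.succ_ne_zero
      have cancel : (C ((N + 1 : ℕ) : K)⁻¹ : K⟦X⟧) * ((N + 1 : ℕ) : K⟦X⟧) = 1 := by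
        rw [← map_natCast (C (R := K)), ← map_mul, inv_mul_cancel₀ hN, map_one]
      rw [Derivation.map_smul, derivative_pow, map_sub, derivative_exp, derivative_one,
        smul_eq_C_mul, ← neg_sub (exp K) 1, neg_pow (exp K - 1) N]
      simp only [map_mul, map_pow, map_neg, map_one, sub_zero, Nat.add_sub_cancel]
      linear_combination (-1) ^ N * (exp K - 1) ^ N * exp K * cancel
    rw [truncLog, sum_Icc_succ_top (by omega), ← truncLog, map_add, ih, term]
    ring

theorem coeff_truncLog_exp {N k : ℕ} (hk : k ≤ N) :
    coeff k (truncLog K N (exp K)) = if k = 1 then 1 else 0 := by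
  rcases k with _ | k
  · rw [coeff_zero_eq_constantCoeff_apply, truncLog, map_sum, if_neg zero_ne_one]
    exact sum_eq_zero fun m hm => by
      simp [zero_pow (Nat.one_le_iff_ne_zero.1 (mem_Icc.1 hm).1)]
  · have hX : X ∣ 1 - exp K := by simp [X_dvd_iff]
    have h := congrArg (coeff k) (derivative_truncLog_exp (K := K) N)
    rw [coeff_derivative, map_sub, X_pow_dvd_iff.1 (pow_dvd_pow_of_dvd hX N) k hk, sub_zero,
      coeff_one] at h
    rcases eq_or_ne k 0 with rfl | hk0
    · simpa using h
    · simpa [hk0, Nat.cast_add_one_ne_zero] using h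

end TruncatedLogarithm

section Convolution

open TensorProduct Coalgebra Bialgebra WithConv
attribute [local instance] LieRing.ofAssociativeRing

variable {K C D A B : Type*} [CommRing K] [Ring C] [Bialgebra K C] [Ring D] [Bialgebra K D]
  [Ring A] [Algebra K A] [Ring B] [Algebra K B]

variable (K C) in
/-- The elements `z` of a bialgebra with `Δ z = z ⊗ 1 + 1 ⊗ z`, as a Lie algebra for the
commutator. -/
def primitiveElements : LieSubalgebra K C where
  toSubmodule :=
    LinearMap.eqLocus comul ((TensorProduct.mk K C C).flip 1 + TensorProduct.mk K C C 1)
  lie_mem' {x y} hx hy := by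
    change comul (R := K) x = x ⊗ₜ 1 + 1 ⊗ₜ x at hx
    change comul (R := K) y = y ⊗ₜ 1 + 1 ⊗ₜ y at hy
    change comul (R := K) ⁅x, y⁆ = ⁅x, y⁆ ⊗ₜ 1 + 1 ⊗ₜ ⁅x, y⁆
    simp only [Ring.lie_def, map_sub, comul_mul, hx, hy, add_mul, mul_add,
      Algebra.TensorProduct.tmul_mul_tmul, one_mul, mul_one, sub_tmul, tmul_sub]
    abel

theorem mem_primitiveElements {z : C} :
    z ∈ primitiveElements K C ↔ comul (R := K) z = z ⊗ₜ 1 + 1 ⊗ₜ z :=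
  Iff.rfl

theorem counit_eq_zero_of_mem_primitiveElements {z : C} (hz : z ∈ primitiveElements K C) :
    counit (R := K) z = 0 := by
  have h := rTensor_counit_comul (R := K) z
  simp only [mem_primitiveElements.1 hz, map_add, LinearMap.rTensor_tmul, counit_one,
    add_eq_right] at h
  simpa using congrArg (counit (R := K) ∘ TensorProduct.lid K C) h

theorem convMul_pow_of_mem_primitiveElements {z : C} (hz : z ∈ primitiveElements K C)
    (f g : WithConv (C →ₗ[K] A)) (k : ℕ) :
    (f * g) (z ^ k) = ∑ j ∈ range (k + 1), k.choose j • (f (z ^ j) * g (z ^ (k - j))) := by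
  have hcomm : Commute (z ⊗ₜ[K] (1 : C)) (1 ⊗ₜ[K] z) := by simp [Commute, SemiconjBy]
  rw [LinearMap.convMul_apply, comul_pow, mem_primitiveElements.1 hz, hcomm.add_pow, map_sum,
    map_sum]
  refine sum_congr rfl fun j _ => ?_
  rw [(Nat.cast_commute (k.choose j) _).symm.eq, ← nsmul_eq_mul, map_nsmul, map_nsmul]
  simp

/-- Composition with a morphism of algebras on the left, as a morphism of convolution algebras. -/
def convComp (φ : A →ₐ[K] B) : WithConv (C →ₗ[K] A) →ₐ[K] WithConv (C →ₗ[K] B) where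
  toFun f := toConv (φ.toLinearMap ∘ₗ f.ofConv)
  map_one' := by ext; simp
  map_mul' f g := congrArg toConv (LinearMap.algHom_comp_convMul_distrib φ f g)
  map_zero' := by ext; simp
  map_add' f g := by ext; simp
  commutes' c := by ext; simp

/-- Composition with a morphism of bialgebras on the right, as a morphism of convolution
algebras. -/
def convPrecomp (φ : C →ₐc[K] D) : WithConv (D →ₗ[K] A) →ₐ[K] WithConv (C →ₗ[K] A) where
  toFun f := toConv (f.ofConv ∘ₗ (φ : C →ₗc[K] D).toLinearMap)
  map_one' := by ext; simp
  map_mul' f g := congrArg toConv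
    (LinearMap.convMul_comp_coalgHom_distrib f g (φ : C →ₗc[K] D))
  map_zero' := by ext; simp
  map_add' f g := by ext; simp
  commutes' c := by ext; simp

end Convolution

section ConvolutionLogarithm

open WithConv

variable {K C D A : Type*} [Field K] [Ring C] [Bialgebra K C] [Ring D] [Bialgebra K D]
  [Ring A] [Algebra K A]

/-- The exponential generating series `∑ f (z ^ k) / k! * X ^ k` of a linear map `f` along a
primitive element `z`; it turns convolution into multiplication. -/
def powGenSeries [CharZero K] {z : C} (hz : z ∈ primitiveElements K C) :
    WithConv (C →ₗ[K] A) →ₐ[K] PowerSeries A :=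
  AlgHom.ofLinearMap
    { toFun f := PowerSeries.mk fun k => (k.factorial : K)⁻¹ • f (z ^ k)
      map_add' f g := by ext k; simp
      map_smul' c f := by ext k; simpa using smul_comm _ _ _ }
    (by
      ext k
      rcases eq_or_ne k 0 with rfl | hk
      · simp
      · simp [counit_eq_zero_of_mem_primitiveElements hz, hk, PowerSeries.coeff_one])
    (fun f g => by
      ext k
      simp only [LinearMap.coe_mk, AddHom.coe_mk, PowerSeries.coeff_mk, PowerSeries.coeff_mul,
        convMul_pow_of_mem_primitiveElements hz, smul_sum,
        Finset.Nat.sum_antidiagonal_eq_sum_range_succ_mk]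
      refine sum_congr rfl fun j hj => ?_
      have hj : j ≤ k := Nat.lt_succ_iff.1 (mem_range.1 hj)
      have := Nat.cast_ne_zero (R := K).2 k.factorial_ne_zero
      rw [smul_mul_smul_comm, ← Nat.cast_smul_eq_nsmul K, smul_smul, Nat.cast_choose K hj]
      field_simp)

variable (K) in
/-- The substitution `P(X) ↦ P(z X)`; unlike in `PowerSeries.rescale`, the algebra containing `z`
may be noncommutative. -/
def scaleX (z : A) : PowerSeries K →ₐ[K] PowerSeries A :=
  AlgHom.ofLinearMap
    { toFun P := PowerSeries.mk fun k => PowerSeries.coeff k P • z ^ k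
      map_add' P Q := by ext k; simp [add_smul]
      map_smul' c P := by ext k; simp [mul_smul] }
    (by ext k; rcases eq_or_ne k 0 with rfl | hk <;> simp [PowerSeries.coeff_one, *])
    (fun P Q => by
      ext k
      simp only [LinearMap.coe_mk, AddHom.coe_mk, PowerSeries.coeff_mk, PowerSeries.coeff_mul,
        sum_smul]
      refine sum_congr rfl fun p hp => ?_
      rw [smul_mul_smul_comm, ← pow_add, mem_antidiagonal.1 hp])

variable (K) in
/-- The logarithm of the identity of a bialgebra for the convolution product (the first Eulerian
idempotent), truncated after the `N`-th term. The omitted terms vanish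
on products of at most `N` primitive elements. -/
def convLog (N : ℕ) : C →ₗ[K] C := (truncLog K N (toConv (LinearMap.id : C →ₗ[K] C))).ofConv

theorem convLog_apply (N : ℕ) (c : C) :
    convLog K N c = ∑ m ∈ Icc 1 N, ((-1 : K) ^ (m + 1) * (m : K)⁻¹) •
      ((toConv LinearMap.id - 1) ^ m : WithConv (C →ₗ[K] C)) c := by
  simp [convLog, truncLog]

theorem coeff_powGenSeries [CharZero K] {z : C} (hz : z ∈ primitiveElements K C)
    (f : WithConv (C →ₗ[K] A)) (k : ℕ) :
    PowerSeries.coeff k (powGenSeries hz f) = (k.factorial : K)⁻¹ • f (z ^ k) := by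
  simp [powGenSeries]

theorem coeff_scaleX (z : A) (P : PowerSeries K) (k : ℕ) :
    PowerSeries.coeff k (scaleX K z P) = PowerSeries.coeff k P • z ^ k := by
  simp [scaleX]

theorem powGenSeries_id [CharZero K] {z : C} (hz : z ∈ primitiveElements K C) :
    powGenSeries hz (toConv LinearMap.id) = scaleX K z (PowerSeries.exp K) := by
  ext k
  simp [coeff_powGenSeries, coeff_scaleX, PowerSeries.coeff_exp]

theorem convLog_pow [CharZero K] {z : C} (hz : z ∈ primitiveElements K C) {N k : ℕ} (hk : k ≤ N) :
    convLog K N (z ^ k) = if k = 1 then z else 0 := by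
  have series_log : powGenSeries hz (toConv (convLog K N)) =
      scaleX K z (truncLog K N (PowerSeries.exp K)) := by
    rw [map_truncLog, ← powGenSeries_id hz, ← map_truncLog, convLog, toConv_ofConv]
  have h := congrArg (PowerSeries.coeff k) series_log
  have hk0 : (k.factorial : K)⁻¹ ≠ 0 := inv_ne_zero (Nat.cast_ne_zero.2 k.factorial_ne_zero)
  rw [coeff_powGenSeries, coeff_scaleX, coeff_truncLog_exp hk] at h
  rcases eq_or_ne k 1 with rfl | h1
  · simpa using h
  · simpa [h1, hk0] using h

theorem convLog_map (φ : C →ₐc[K] D) (N : ℕ) (c : C) :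
    convLog K N (φ c) = φ (convLog K N c) := by
  have log_toConv : convPrecomp φ (truncLog K N (toConv LinearMap.id)) =
      convComp (φ : C →ₐ[K] D) (truncLog K N (toConv LinearMap.id)) := by
    rw [map_truncLog, map_truncLog]
    rfl
  exact congrArg (fun f => f c) log_toConv

end ConvolutionLogarithm

section FreeBialgebra

open TensorProduct Coalgebra Bialgebra WithConv
attribute [local instance] LieRing.ofAssociativeRing

variable {K : Type*} [CommRing K] {α β : Type*}

/-- The free associative algebra as the bialgebra whose generators are primitive. -/
instance instBialgebraFreeAlgebra : Bialgebra K (FreeAlgebra K α) :=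
  Bialgebra.ofAlgHom
    (FreeAlgebra.lift K fun a => FreeAlgebra.ι K a ⊗ₜ 1 + 1 ⊗ₜ FreeAlgebra.ι K a)
    (FreeAlgebra.lift K fun _ => 0)
    (by
      ext a
      simp [TensorProduct.tmul_add, TensorProduct.add_tmul, Algebra.TensorProduct.one_def,
        add_assoc])
    (by ext a; simp)
    (by ext a; simp)

theorem comul_ι (a : α) :
    comul (R := K) (FreeAlgebra.ι K a) = FreeAlgebra.ι K a ⊗ₜ 1 + 1 ⊗ₜ FreeAlgebra.ι K a :=
  FreeAlgebra.lift_ι_apply _ a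

theorem counit_ι (a : α) : counit (R := K) (FreeAlgebra.ι K a) = 0 :=
  FreeAlgebra.lift_ι_apply _ a

variable (K α) in
/-- The free Lie algebra, realized inside the free associative algebra. -/
def freeLie : LieSubalgebra K (FreeAlgebra K α) :=
  LieSubalgebra.lieSpan K (FreeAlgebra K α) (Set.range (FreeAlgebra.ι K))

theorem freeLie_le_primitiveElements : freeLie K α ≤ primitiveElements K (FreeAlgebra K α) :=
  LieSubalgebra.lieSpan_le.2 <| Set.range_subset_iff.2 comul_ι

variable (K) in
/-- The product of the generators occurring in a word. -/
def word (l : List α) : FreeAlgebra K α := (l.map (FreeAlgebra.ι K)).prod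

theorem word_nil : word K ([] : List α) = 1 := rfl

theorem word_cons (a : α) (l : List α) : word K (a :: l) = FreeAlgebra.ι K a * word K l := by
  simp [word]

theorem word_append (l l' : List α) : word K (l ++ l') = word K l * word K l' := by
  simp [word]

theorem prod_one_add_ι (l : List α) :
    (l.map fun a => 1 + FreeAlgebra.ι K a).prod = (l.sublists'.map (word K)).sum := by
  induction l with
  | nil => simp [word_nil]
  | cons a l ih =>
    simp [ih, word_cons, add_mul, List.sum_map_mul_left, Function.comp_def]

theorem counit_word (l : List α) : counit (R := K) (word K l) = if l = [] then 1 else 0 := by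
  cases l <;> simp [word_nil, word_cons, counit_ι]

/-- All ways of splitting a word into a subword and its complementary subword. -/
def splits : List α → Multiset (List α × List α)
  | [] => {([], [])}
  | a :: l =>
    (splits l).map (Prod.map (List.cons a) id) + (splits l).map (Prod.map id (List.cons a))

theorem sublist_of_mem_splits {l : List α} {p : List α × List α} (hp : p ∈ splits l) :
    p.1.Sublist l ∧ p.2.Sublist l := by
  induction l generalizing p with
  | nil => simp_all [splits]
  | cons a l ih =>
    simp only [splits, Multiset.mem_add, Multiset.mem_map] at hp
    rcases hp with ⟨q, hq, rfl⟩ | ⟨q, hq, rfl⟩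
    · exact ⟨(ih hq).1.cons_cons a, (ih hq).2.cons a⟩
    · exact ⟨(ih hq).1.cons a, (ih hq).2.cons_cons a⟩

theorem map_coe_splits (l : List α) :
    (splits l).map (fun p => ((p.1 : Multiset α), (p.2 : Multiset α))) =
      Multiset.antidiagonal (l : Multiset α) := by
  induction l with
  | nil => rfl
  | cons a l ih =>
    rw [← Multiset.cons_coe, Multiset.antidiagonal_cons, ← ih, splits, Multiset.map_add, add_comm]
    simp only [Multiset.map_map]
    rfl

theorem comul_word (l : List α) :
    comul (R := K) (word K l) = ((splits l).map fun p => word K p.1 ⊗ₜ[K] word K p.2).sum := by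
  induction l with
  | nil => simp [word_nil, splits, Algebra.TensorProduct.one_def]
  | cons a l ih =>
    simp only [word_cons, comul_mul, comul_ι, ih, add_mul, splits, Multiset.map_add,
      Multiset.sum_add, Multiset.map_map, ← Multiset.sum_map_mul_left, Function.comp_def,
      Prod.map_fst, Prod.map_snd, id, Algebra.TensorProduct.tmul_mul_tmul, one_mul,
      Multiset.sum_map_add]

theorem convMul_word {A : Type*} [Ring A] [Algebra K A]
    (f g : WithConv (FreeAlgebra K α →ₗ[K] A)) (l : List α) :
    (f * g) (word K l) = ((splits l).map fun p => f (word K p.1) * g (word K p.2)).sum := by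
  rw [LinearMap.convMul_apply, comul_word, map_multiset_sum, map_multiset_sum, Multiset.map_map,
    Multiset.map_map]
  rfl

variable (K) in
/-- The morphism of free algebras induced by a map of generators. -/
def freeMap (φ : α → β) : FreeAlgebra K α →ₐc[K] FreeAlgebra K β :=
  BialgHom.ofAlgHom (FreeAlgebra.lift K fun a => FreeAlgebra.ι K (φ a))
    (by ext a; simp [counit_ι])
    (by ext a; simp [comul_ι])

theorem freeMap_word (φ : α → β) (l : List α) : freeMap K φ (word K l) = word K (l.map φ) := by
  rw [word, map_list_prod, word, List.map_map, List.map_map]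
  congr 2
  ext a
  exact FreeAlgebra.lift_ι_apply _ a

theorem basisFreeMonoid_ofList (l : List α) :
    FreeAlgebra.basisFreeMonoid K α (FreeMonoid.ofList l) = word K l := by
  simp [FreeAlgebra.basisFreeMonoid, FreeAlgebra.equivMonoidAlgebraFreeMonoid, word,
    FreeMonoid.lift_ofList]

theorem lhom_ext_word {M : Type*} [AddCommGroup M] [Module K M] {f g : FreeAlgebra K α →ₗ[K] M}
    (h : ∀ l, f (word K l) = g (word K l)) : f = g :=
  (FreeAlgebra.basisFreeMonoid K α).ext fun w => by
    rw [← FreeMonoid.ofList_toList w, basisFreeMonoid_ofList, h]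

theorem convLog_word_map {K : Type*} [Field K] (φ : α → β) (N : ℕ) (l : List α) :
    convLog K N (word K (l.map φ)) = freeMap K φ (convLog K N (word K l)) := by
  rw [← freeMap_word, convLog_map]

end FreeBialgebra

section SymmetricPowers

variable {K A : Type*} [CommRing K] [Ring A] [Algebra K A]

/-- Inclusion–exclusion over the set of omitted indices. -/
theorem sum_perm_prod_eq_sum_pow {k : ℕ} (z : Fin k → A) :
    ∑ σ : Equiv.Perm (Fin k), (List.ofFn (z ∘ σ)).prod =
      ∑ T : Finset (Fin k), (-1 : ℤ) ^ #T • (∑ i ∈ Tᶜ, z i) ^ k := by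
  let omitting (i : Fin k) : Finset (Fin k → Fin k) := {r | ∀ j, r j ≠ i}
  have sum_surjective : ∑ σ : Equiv.Perm (Fin k), (List.ofFn (z ∘ σ)).prod =
      ∑ r ∈ univ.inf fun i => (omitting i)ᶜ, (List.ofFn (z ∘ r)).prod := by
    refine sum_bij (fun σ _ => σ) (fun σ _ => ?_) (fun σ _ τ _ h => DFunLike.coe_injective h)
      (fun r hr => ?_) fun _ _ => rfl
    · simpa [omitting, Finset.mem_inf, Function.Surjective] using σ.surjective
    · have surj : Function.Surjective r := by
        simpa [omitting, Finset.mem_inf, Function.Surjective] using hr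
      exact ⟨Equiv.ofBijective r (Finite.surjective_iff_bijective.1 surj), mem_univ _, rfl⟩
  have sum_omitting (T : Finset (Fin k)) :
      ∑ r ∈ T.inf omitting, (List.ofFn (z ∘ r)).prod = (∑ i ∈ Tᶜ, z i) ^ k := by
    have h : T.inf omitting = Fintype.piFinset fun _ => Tᶜ := by
      ext r
      simp only [Finset.mem_inf, omitting, mem_filter_univ, Fintype.mem_piFinset, mem_compl]
      exact ⟨fun h j hj => h _ hj j rfl, fun h i hi j hj => h j (hj ▸ hi)⟩
    rw [← MultilinearMap.mkPiAlgebraFin_apply_const (R := ℤ),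
      MultilinearMap.map_sum_finset (MultilinearMap.mkPiAlgebraFin ℤ k A) (fun _ i => z i), h]
    simp only [MultilinearMap.mkPiAlgebraFin_apply, Function.comp_def]
  simp only [sum_surjective, inclusion_exclusion_sum_inf_compl, powerset_univ, sum_omitting]

attribute [local instance] LieRing.ofAssociativeRing

/-- The span of the products of at most `N` elements of a Lie algebra. -/
def prodSpan (L : LieSubalgebra K A) (N : ℕ) : Submodule K A :=
  Submodule.span K {a | ∃ l : List A, (∀ x ∈ l, x ∈ L) ∧ l.length ≤ N ∧ l.prod = a}

/-- The span of the powers of elements of a Lie algebra with exponent at most `N`. -/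
def powSpan (L : LieSubalgebra K A) (N : ℕ) : Submodule K A :=
  Submodule.span K {a | ∃ z ∈ L, ∃ j ≤ N, z ^ j = a}

variable {L : LieSubalgebra K A}

theorem prod_mem_prodSpan {N : ℕ} {l : List A} (hl : ∀ x ∈ l, x ∈ L) (hN : l.length ≤ N) :
    l.prod ∈ prodSpan L N :=
  Submodule.subset_span ⟨l, hl, hN, rfl⟩

theorem pow_mem_powSpan {N j : ℕ} {z : A} (hz : z ∈ L) (hj : j ≤ N) : z ^ j ∈ powSpan L N :=
  Submodule.subset_span ⟨z, hz, j, hj, rfl⟩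

theorem powSpan_mono {M N : ℕ} (h : M ≤ N) : powSpan L M ≤ powSpan L N :=
  Submodule.span_mono fun _ ⟨z, hz, j, hj, e⟩ => ⟨z, hz, j, hj.trans h, e⟩

theorem mul_mem_prodSpan_succ {N : ℕ} {x a : A} (hx : x ∈ L) (ha : a ∈ prodSpan L N) :
    x * a ∈ prodSpan L (N + 1) := by
  refine Submodule.span_induction (p := fun a _ => x * a ∈ prodSpan L (N + 1)) ?_ (by simp)
    (fun a b _ _ ha hb => by simpa [mul_add] using add_mem ha hb)
    (fun c a _ ha => by simpa using Submodule.smul_mem _ c ha) ha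
  rintro _ ⟨l, hl, hN, rfl⟩
  rw [← List.prod_cons]
  exact prod_mem_prodSpan (List.forall_mem_cons.2 ⟨hx, hl⟩) (Nat.succ_le_succ hN)

/-- Reordering the factors costs commutators, which shorten the product. -/
theorem prod_sub_prod_mem_prodSpan {l l' : List A} (h : l.Perm l') (hl : ∀ x ∈ l, x ∈ L)
    {N : ℕ} (hN : l.length ≤ N + 1) : l.prod - l'.prod ∈ prodSpan L N := by
  induction h generalizing N with
  | nil => simp
  | @cons x l l' h ih =>
    rw [List.forall_mem_cons] at hl
    rw [List.prod_cons, List.prod_cons, ← mul_sub]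
    match N with
    | 0 =>
      obtain rfl : l = [] := by simpa using hN
      simp [h.nil_eq]
    | N + 1 => exact mul_mem_prodSpan_succ hl.1 (ih hl.2 (Nat.succ_le_succ_iff.1 hN))
  | swap x y l =>
    rw [List.forall_mem_cons, List.forall_mem_cons] at hl
    have bracket : (y :: x :: l).prod - (x :: y :: l).prod = (⁅y, x⁆ :: l).prod := by
      simp only [List.prod_cons, Ring.lie_def, sub_mul, mul_assoc]
    rw [bracket]
    exact prod_mem_prodSpan (List.forall_mem_cons.2 ⟨L.lie_mem hl.1 hl.2.1, hl.2.2⟩)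
      (Nat.succ_le_succ_iff.1 hN)
  | trans h₁ _ ih₁ ih₂ =>
    simpa using add_mem (ih₁ hl hN)
      (ih₂ (fun x hx => hl x (h₁.mem_iff.2 hx)) (h₁.length_eq ▸ hN))

theorem sum_perm_prod_mem_powSpan {k : ℕ} {z : Fin k → A} (hz : ∀ i, z i ∈ L) :
    ∑ σ : Equiv.Perm (Fin k), (List.ofFn (z ∘ σ)).prod ∈ powSpan L k := by
  rw [sum_perm_prod_eq_sum_pow]
  exact sum_mem fun T _ => zsmul_mem (pow_mem_powSpan (sum_mem fun i _ => hz i) le_rfl) _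

theorem word_mem_prodSpan {α : Type*} (l : List α) :
    word K l ∈ prodSpan (freeLie K α) l.length := by
  refine prod_mem_prodSpan (List.forall_mem_map.2 fun a _ => ?_) (List.length_map _).le
  exact LieSubalgebra.subset_lieSpan (Set.mem_range_self a)

/-- This is the surjectivity of the symmetrization map. -/
theorem prodSpan_le_powSpan {K : Type*} [Field K] [CharZero K] [Algebra K A]
    {L : LieSubalgebra K A} (N : ℕ) : prodSpan L N ≤ powSpan L N := by
  induction N with
  | zero =>
    refine Submodule.span_le.2 ?_
    rintro _ ⟨l, -, hN, rfl⟩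
    obtain rfl : l = [] := by simpa using hN
    simpa using pow_mem_powSpan (j := 0) L.zero_mem le_rfl
  | succ N ih =>
    refine Submodule.span_le.2 ?_
    rintro _ ⟨l, hl, hN, rfl⟩
    have lower : prodSpan L N ≤ powSpan L (N + 1) := ih.trans (powSpan_mono N.le_succ)
    have symmetrization : ∑ σ : Equiv.Perm (Fin l.length), (List.ofFn (l.get ∘ σ)).prod ∈
        powSpan L (N + 1) :=
      powSpan_mono hN (sum_perm_prod_mem_powSpan fun i => hl _ (l.get_mem i))
    have perm (σ : Equiv.Perm (Fin l.length)) : l.Perm (List.ofFn (l.get ∘ σ)) := by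
      simpa using (σ.ofFn_comp_perm l.get).symm
    have reordering : ∑ σ : Equiv.Perm (Fin l.length),
        (l.prod - (List.ofFn (l.get ∘ σ)).prod) ∈ powSpan L (N + 1) :=
      sum_mem fun σ _ => lower <| prod_sub_prod_mem_prodSpan (perm σ) hl hN
    have h := add_mem symmetrization reordering
    rw [sum_sub_distrib, add_sub_cancel, sum_const, ← Nat.cast_smul_eq_nsmul K] at h
    refine (Submodule.smul_mem_iff _ ?_).1 h
    simp [Fintype.card_perm, Nat.factorial_ne_zero]

end SymmetricPowers

section Completion

open WithConv
attribute [local instance] LieRing.ofAssociativeRing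

variable {K : Type} [Field K] {n : ℕ}

theorem mulF_delta_delta (u v : List (Fin n)) :
    mulF (delta u : Fhat K n) (delta v) = delta (u ++ v) := by
  funext w
  simp only [mulF, delta, ← ite_and, mul_ite, mul_one, mul_zero]
  by_cases hw : w = u ++ v
  · rw [if_pos hw, sum_eq_single u.length]
    · simp [hw]
    · intro i hi hne
      refine if_neg fun h => hne ?_
      have length_take := congrArg List.length h.2
      rw [List.length_take_of_le (Nat.lt_succ_iff.1 (mem_range.1 hi))] at length_take
      exact length_take
    · simp [hw]
  · rw [if_neg hw]
    refine sum_eq_zero fun i _ => if_neg fun h => hw ?_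
    rw [← List.take_append_drop i w, h.1, h.2]

/-- The product of `F̂ₙ` as a bilinear map. -/
def mulFBilin : Fhat K n →ₗ[K] Fhat K n →ₗ[K] Fhat K n :=
  LinearMap.mk₂ K mulF
    (fun f f' g => by funext w; simp [mulF, add_mul, sum_add_distrib])
    (fun c f g => by funext w; simp [mulF, mul_assoc, mul_sum])
    (fun f g g' => by funext w; simp [mulF, mul_add, sum_add_distrib])
    (fun c f g => by funext w; simp [mulF, mul_left_comm, mul_sum])

/-- The inclusion of the free associative algebra into its degree completion. -/
def toFhat : FreeAlgebra K (Fin n) →ₗ[K] Fhat K n :=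
  (FreeAlgebra.basisFreeMonoid K (Fin n)).constr K fun w => delta w.toList

theorem toFhat_word (l : List (Fin n)) : toFhat (word K l) = delta l := by
  rw [← basisFreeMonoid_ofList, toFhat, Module.Basis.constr_basis, FreeMonoid.toList_ofList]

theorem toFhat_one : toFhat (1 : FreeAlgebra K (Fin n)) = oneF := toFhat_word []

theorem toFhat_ι (i : Fin n) : toFhat (FreeAlgebra.ι K i) = delta [i] := by
  rw [← toFhat_word, word, List.map_singleton, List.prod_singleton]

theorem toFhat_mul (a b : FreeAlgebra K (Fin n)) :
    toFhat (a * b) = mulF (toFhat a) (toFhat b) := by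
  have bilinear : (LinearMap.mul K (FreeAlgebra K (Fin n))).compr₂ toFhat =
      mulFBilin.compl₁₂ toFhat toFhat := by
    refine lhom_ext_word fun u => lhom_ext_word fun v => ?_
    change toFhat (word K u * word K v) = mulF (toFhat (word K u)) (toFhat (word K v))
    rw [← word_append, toFhat_word, toFhat_word, toFhat_word, mulF_delta_delta]
  exact LinearMap.congr_fun₂ bilinear a b

theorem prodListF_map_toFhat (l : List (FreeAlgebra K (Fin n))) :
    prodListF (l.map toFhat) = toFhat l.prod := by
  induction l with
  | nil => exact toFhat_one.symm
  | cons a l ih => rw [List.map_cons, prodListF, ih, List.prod_cons, toFhat_mul]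

theorem powF_toFhat (a : FreeAlgebra K (Fin n)) (k : ℕ) : powF (toFhat a) k = toFhat (a ^ k) := by
  induction k with
  | zero => rw [powF, pow_zero, toFhat_one]
  | succ k ih => rw [powF, ih, pow_succ', toFhat_mul]

theorem symProd_const [CharZero K] (a : FreeAlgebra K (Fin n)) (k : ℕ) :
    symProd (fun _ : Fin k => toFhat a) = toFhat (a ^ k) := by
  have hk : (k.factorial : K) ≠ 0 := Nat.cast_ne_zero.2 k.factorial_ne_zero
  simp only [symProd, Function.comp_def, List.ofFn_const, ← List.map_replicate,
    prodListF_map_toFhat, List.prod_replicate, sum_const, card_univ, Fintype.card_perm,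
    Fintype.card_fin]
  rw [← Nat.cast_smul_eq_nsmul K, inv_smul_smul₀ hk]

theorem isLieElem_toFhat {z : FreeAlgebra K (Fin n)} (hz : z ∈ freeLie K (Fin n)) :
    IsLieElem (toFhat z) := by
  induction hz using LieSubalgebra.lieSpan_induction with
  | mem z hz =>
    obtain ⟨i, rfl⟩ := hz
    exact toFhat_ι (K := K) i ▸ .gen i
  | zero => simpa using IsLieElem.zero
  | add x y _ _ hx hy => simpa using hx.add hy
  | smul c x _ hx => simpa using hx.smul c
  | lie x y _ _ hx hy => simpa [Ring.lie_def, toFhat_mul] using hx.lieBracket hy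

theorem pushF_delta {k : ℕ} (φ : Fin k → Fin n) (l : List (Fin k)) :
    pushF φ (delta l : Fhat K k) = delta (l.map φ) := by
  funext v
  simp only [pushF, delta, ← ite_and]
  by_cases hv : v = l.map φ
  · subst hv
    let letters (i : Fin (l.map φ).length) : Fin k := l.get (i.cast (List.length_map φ))
    have ofFn_letters : List.ofFn letters = l :=
      List.ext_getElem (by simp) (by simp [letters])
    rw [if_pos rfl, sum_eq_single letters]
    · rw [if_pos ⟨by rw [ofFn_letters], ofFn_letters⟩]
    · refine fun u _ hu => if_neg fun h => hu (List.ofFn_injective ?_)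
      rw [h.2, ofFn_letters]
    · simp
  · rw [if_neg hv]
    refine sum_eq_zero fun u _ => if_neg fun h => hv ?_
    rw [← h.1, h.2]

/-- The substitution of generators `pushF φ` as a linear map. -/
def pushFLin {k : ℕ} (φ : Fin k → Fin n) : Fhat K k →ₗ[K] Fhat K n where
  toFun := pushF φ
  map_add' f g := by
    funext v
    simp only [pushF, Pi.add_apply, ← sum_add_distrib, ite_add_zero]
  map_smul' c f := by
    funext v
    simp only [pushF, Pi.smul_apply, smul_sum, smul_ite, smul_zero, RingHom.id_apply]

theorem toFhat_freeMap {k : ℕ} (φ : Fin k → Fin n) (a : FreeAlgebra K (Fin k)) :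
    toFhat (freeMap K φ a) = pushF φ (toFhat a) := by
  have linear : toFhat ∘ₗ (freeMap K φ : FreeAlgebra K (Fin k) →ₗ[K] FreeAlgebra K (Fin n)) =
      pushFLin (K := K) φ ∘ₗ toFhat := by
    refine lhom_ext_word fun l => ?_
    change toFhat (freeMap K φ (word K l)) = pushF φ (toFhat (word K l))
    rw [freeMap_word, toFhat_word, toFhat_word, pushF_delta]
  exact LinearMap.congr_fun linear a

end Completion

section Multidegree

open WithConv

variable {K : Type} [Field K] {n : ℕ}

/-- The component of multidegree `s`: the part supported on the words which are arrangements of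
the multiset of letters `s`. -/
def multidegreePart (s : Multiset (Fin n)) : Fhat K n →ₗ[K] Fhat K n where
  toFun f u := if (u : Multiset (Fin n)) = s then f u else 0
  map_add' f g := by
    funext u
    simp only [Pi.add_apply, ite_add_zero]
  map_smul' c f := by
    funext u
    simp only [Pi.smul_apply, smul_ite, smul_zero, RingHom.id_apply]

theorem multidegreePart_apply (s : Multiset (Fin n)) (f : Fhat K n) (u : List (Fin n)) :
    multidegreePart s f u = if (u : Multiset (Fin n)) = s then f u else 0 := rfl

theorem nodup_antidiagonal {α : Type*} {s : Multiset α} (hs : s.Nodup) :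
    s.antidiagonal.Nodup := by
  classical
  rw [Multiset.antidiagonal_eq_map_powerset]
  exact (Multiset.nodup_powerset.2 hs).map fun _ _ h => congrArg Prod.snd h

theorem multidegreePart_mulF {s : Multiset (Fin n)} (hs : s.Nodup) (f g : Fhat K n) :
    multidegreePart s (mulF f g) =
      (s.antidiagonal.map fun q =>
        mulF (multidegreePart q.1 f) (multidegreePart q.2 g)).sum := by
  change _ = ∑ q ∈ ⟨s.antidiagonal, nodup_antidiagonal hs⟩,
    mulF (multidegreePart q.1 f) (multidegreePart q.2 g)
  funext u
  have cut_iff (i : ℕ) :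
      ((u.take i : Multiset (Fin n)), (u.drop i : Multiset (Fin n))) ∈ s.antidiagonal ↔
        (u : Multiset (Fin n)) = s := by
    rw [Multiset.mem_antidiagonal, Multiset.coe_add, List.take_append_drop]
  have eq_cut_iff (i : ℕ) (q : Multiset (Fin n) × Multiset (Fin n)) :
      ((u.take i : Multiset (Fin n)) = q.1 ∧ (u.drop i : Multiset (Fin n)) = q.2) ↔
        ((u.take i : Multiset (Fin n)), (u.drop i : Multiset (Fin n))) = q := by
    rw [Prod.ext_iff]
  rw [Finset.sum_apply]
  simp only [multidegreePart_apply, mulF, ite_zero_mul_ite_zero]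
  rw [sum_comm]
  simp only [eq_cut_iff, sum_ite_eq, Finset.mem_mk, cut_iff]
  split_ifs <;> simp only [sum_const_zero]

theorem multidegreePart_mulF_word {l : List (Fin n)} (hl : l.Nodup) (f g : Fhat K n) :
    multidegreePart l (mulF f g) =
      ((splits l).map fun p => mulF (multidegreePart p.1 f) (multidegreePart p.2 g)).sum := by
  rw [multidegreePart_mulF (Multiset.coe_nodup.2 hl), ← map_coe_splits, Multiset.map_map]
  rfl

theorem multidegreePart_oneF (l : List (Fin n)) :
    multidegreePart l oneF =
      toFhat ((1 : WithConv (FreeAlgebra K (Fin n) →ₗ[K] FreeAlgebra K (Fin n))) (word K l)) := by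
  funext u
  rw [LinearMap.convOne_apply, counit_word, multidegreePart_apply]
  by_cases hl : l = []
  · by_cases hu : u = [] <;> simp [hl, hu, toFhat_one, oneF]
  · by_cases hu : u = [] <;> simp [hl, hu, oneF, eq_comm]

variable {X : Fhat K n} {L : List (Fin n)}

theorem multidegreePart_powF_sub_one (hL : L.Nodup)
    (hX : ∀ l : List (Fin n), l.Sublist L → multidegreePart l X = delta l) (m : ℕ)
    {l : List (Fin n)} (hl : l.Sublist L) :
    multidegreePart l (powF (X - oneF) m) =
      toFhat (((toConv LinearMap.id - 1) ^ m : WithConv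
        (FreeAlgebra K (Fin n) →ₗ[K] FreeAlgebra K (Fin n))) (word K l)) := by
  induction m generalizing l with
  | zero => rw [powF, pow_zero, multidegreePart_oneF]
  | succ m ih =>
    have linear_part {l : List (Fin n)} (hl : l.Sublist L) :
        multidegreePart l (X - oneF) = toFhat ((toConv LinearMap.id - 1 : WithConv
          (FreeAlgebra K (Fin n) →ₗ[K] FreeAlgebra K (Fin n))) (word K l)) := by
      rw [map_sub, hX l hl, multidegreePart_oneF, ← toFhat_word, ← map_sub]
      rfl
    rw [powF, multidegreePart_mulF_word (hL.sublist hl), pow_succ', convMul_word,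
      map_multiset_sum, Multiset.map_map]
    refine congrArg Multiset.sum (Multiset.map_congr rfl fun p hp => ?_)
    have hp := sublist_of_mem_splits hp
    rw [linear_part (hp.1.trans hl), ih (hp.2.trans hl), Function.comp_apply, toFhat_mul]

theorem multidegreePart_logF (hL : L.Nodup)
    (hX : ∀ l : List (Fin n), l.Sublist L → multidegreePart l X = delta l) :
    multidegreePart L (logF X) = toFhat (convLog K L.length (word K L)) := by
  have truncate : multidegreePart L (logF X) = ∑ m ∈ Icc 1 L.length,
      ((-1 : K) ^ (m + 1) * (m : K)⁻¹) • multidegreePart L (powF (X - oneF) m) := by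
    funext u
    simp only [multidegreePart_apply, Finset.sum_apply, Pi.smul_apply, smul_eq_mul]
    split_ifs with hu
    · rw [logF, (Multiset.coe_eq_coe.1 hu).length_eq]
    · simp
  rw [truncate, convLog_apply, map_sum]
  refine sum_congr rfl fun m _ => ?_
  rw [map_smul, multidegreePart_powF_sub_one hL hX m (List.Sublist.refl L)]

end Multidegree

section ProductOfExponentials

variable {K : Type} [Field K] {n : ℕ}

/-- Equality modulo the words with a repeated letter, which do not contribute to the multilinear
part of a series. -/
def EqOnNodup (f g : Fhat K n) : Prop := ∀ u : List (Fin n), u.Nodup → f u = g u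

theorem EqOnNodup.mulF {f f' g g' : Fhat K n} (hf : EqOnNodup f f') (hg : EqOnNodup g g') :
    EqOnNodup (mulF f g) (mulF f' g') := fun u hu =>
  sum_congr rfl fun i _ => by
    rw [hf _ (hu.sublist (List.take_sublist i u)), hg _ (hu.sublist (List.drop_sublist i u))]

theorem powF_delta_singleton (i : Fin n) (j : ℕ) :
    powF (delta [i] : Fhat K n) j = delta (List.replicate j i) := by
  rw [← toFhat_ι, powF_toFhat, ← toFhat_word, word, List.map_replicate, List.prod_replicate]

theorem eqOnNodup_expF_delta [CharZero K] (i : Fin n) :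
    EqOnNodup (expF (delta [i] : Fhat K n)) (toFhat (1 + FreeAlgebra.ι K i)) := by
  intro u hu
  rw [map_add, toFhat_one, toFhat_ι]
  simp only [expF, powF_delta_singleton]
  match u, hu with
  | [], _ => simp [delta, oneF]
  | [a], _ => simp [delta, oneF, sum_range_succ]
  | a :: b :: u, hu =>
    have not_replicate (j : ℕ) : a :: b :: u ≠ List.replicate j i := fun h => by
      have length_eq := congrArg List.length h
      rw [h, List.nodup_replicate] at hu
      simp only [List.length_cons, List.length_replicate] at length_eq
      omega
    simp [delta, oneF, not_replicate]

theorem eqOnNodup_prodListF_expF [CharZero K] (L : List (Fin n)) :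
    EqOnNodup (prodListF (L.map fun i => expF (delta [i] : Fhat K n)))
      (toFhat (L.map fun i => 1 + FreeAlgebra.ι K i).prod) := by
  induction L with
  | nil => exact fun u _ => congrFun toFhat_one.symm u
  | cons i L ih =>
    rw [List.map_cons, List.map_cons, List.prod_cons, toFhat_mul]
    exact (eqOnNodup_expF_delta i).mulF ih

theorem prodListF_expF_apply [CharZero K] {L u : List (Fin n)} (hL : L.Nodup) (hu : u.Nodup) :
    prodListF (L.map fun i => expF (delta [i] : Fhat K n)) u = if u.Sublist L then 1 else 0 := by
  rw [eqOnNodup_prodListF_expF L u hu, prod_one_add_ι, map_list_sum, List.map_map,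
    ← List.sum_toFinset _ (List.nodup_sublists'.2 hL), Finset.sum_apply]
  simp only [Function.comp_apply, toFhat_word, delta, sum_ite_eq, List.mem_toFinset,
    List.mem_sublists']

theorem multidegreePart_prodListF_expF [CharZero K] {l L : List (Fin n)} (hL : L.Nodup)
    (hl : l.Sublist L) :
    multidegreePart l (prodListF (L.map fun i => expF (delta [i] : Fhat K n))) = delta l := by
  funext u
  rw [multidegreePart_apply, delta]
  by_cases hu : (u : Multiset (Fin n)) = l
  · rw [if_pos hu]
    rw [Multiset.coe_eq_coe] at hu
    rw [prodListF_expF_apply hL (hu.nodup_iff.2 (hL.sublist hl))]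
    exact if_congr ⟨fun h => (hL.perm_iff_eq_of_sublist h hl).1 hu, fun h => h ▸ hl⟩ rfl rfl
  · rw [if_neg hu, if_neg fun h => hu (congrArg _ h)]

theorem perm_finRange_iff {k : ℕ} {u : List (Fin k)} :
    u.Perm (List.finRange k) ↔ u.length = k ∧ u.Nodup := by
  refine ⟨fun h => ⟨by simpa using h.length_eq, h.nodup_iff.2 (List.nodup_finRange k)⟩, ?_⟩
  rintro ⟨length_eq, hu⟩
  exact (List.subperm_of_subset hu fun i _ => List.mem_finRange i).perm_of_length_le
    (by simp [length_eq])

theorem CBHuniv_eq [CharZero K] (k : ℕ) :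
    CBHuniv K k = toFhat (convLog K k (word K (List.finRange k))) := by
  have multilinear_part : CBHuniv K k = multidegreePart (List.finRange k)
      (logF (prodListF ((List.finRange k).map fun i => expF (delta [i])))) := by
    funext u
    rw [CBHuniv, multidegreePart_apply, List.ofFn_eq_map]
    exact if_congr (by rw [Multiset.coe_eq_coe, perm_finRange_iff]) rfl rfl
  have nodup := List.nodup_finRange k
  rw [multilinear_part, multidegreePart_logF nodup fun l => multidegreePart_prodListF_expF nodup,
    List.length_finRange]

theorem CBHword_eq [CharZero K] (w : List (Fin n)) :
    CBHword w = toFhat (convLog K w.length (word K w)) := by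
  have letters : (List.finRange w.length).map w.get = w := by
    rw [← List.ofFn_eq_map, List.ofFn_get]
  rw [CBHword, CBHuniv_eq, ← toFhat_freeMap, ← convLog_word_map, letters]

end ProductOfExponentials

/-- **Lemma (`pₙ = cbhₙ`).**  By Poincaré–Birkhoff–Witt, `Fₙ = U(fₙ)` and the
symmetrization `sym : S(fₙ) → Fₙ` is a linear isomorphism; since
`S(fₙ) = ⊕ₖ Sᵏ(fₙ)` and `sym(Sᵏ(fₙ))` is spanned by the symmetrized products
`symProd z` of `k`-tuples `z` of Lie elements, the map
`pₙ = (proj onto S¹(fₙ) = fₙ) ∘ sym⁻¹ : Fₙ → fₙ` is exactly characterized by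
the hypotheses below: `p` is linear, `p(1) = 0` (i.e. `p ∘ sym` kills `S⁰`),
`p(z) = z` for `z ∈ fₙ` (i.e. `p ∘ sym` is the identity on `S¹`), and
`p ∘ sym` kills `Sᵏ` for `k ≥ 2`.  The conclusion: `pₙ = cbhₙ`, i.e.
`p(x_{i₁} ⋯ x_{i_k}) = CBHₖ(x_{i₁}, …, x_{i_k})` for every word
`(i₁, …, i_k)` in the generators (the case of the empty word being
`p(1) = 0 = cbhₙ(1)`). -/
theorem p_eq_cbh {K : Type} [Field K] [CharZero K] {n : ℕ}
    (p : Fhat K n →ₗ[K] Fhat K n)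
    (h0 : p oneF = 0)
    (h1 : ∀ z : Fhat K n, IsLieElem z → p z = z)
    (hk : ∀ k : ℕ, 2 ≤ k → ∀ z : Fin k → Fhat K n,
      (∀ i, IsLieElem (z i)) → p (symProd z) = 0) :
    ∀ w : List (Fin n), p (delta w) = CBHword w := by
  intro w
  let L := freeLie K (Fin n)
  have word_mem : word K w ∈ powSpan L w.length :=
    prodSpan_le_powSpan _ (word_mem_prodSpan w)
  have eqOn_pow : Set.EqOn (p ∘ₗ toFhat) (toFhat ∘ₗ convLog K w.length)
      {a | ∃ z ∈ L, ∃ j ≤ w.length, z ^ j = a} := by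
    rintro _ ⟨z, hz, j, hj, rfl⟩
    simp only [LinearMap.comp_apply, convLog_pow (freeLie_le_primitiveElements hz) hj]
    rcases lt_trichotomy j 1 with h | rfl | h
    · obtain rfl : j = 0 := Nat.lt_one_iff.1 h
      simp [toFhat_one, h0]
    · simp [h1 _ (isLieElem_toFhat hz)]
    · rw [← symProd_const, hk j h _ fun _ => isLieElem_toFhat hz, if_neg h.ne', map_zero]
  rw [CBHword_eq, ← toFhat_word]
  exact LinearMap.eqOn_span eqOn_pow word_mem

end CBHPaper
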